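/- arXiv:1603.06385 — 3 statements merged into one kernel-verified Lean document; each statement's English description precedes it below -/
import Mathlib

section
/- Let W be a kernel and g ∈ L∞([0,1]); let u be the solution of the continuum voting model IVP for (W, g), and for each n ∈ ℕ let u_n be the solution for the block averages (W_n, g_n). Suppose u reaches consensus on [0,1]. Then for every ε > 0, c > 0 and D > 0 there exist T > 0 and N ∈ ℕ such that for every n > N and every t ∈ [T, T + D] there is a measurable set S ⊆ [0,1]² with Lebesgue measure λ(S) < c² such that |u_n(x,t) − u_n(y,t)| ≤ ε for all (x,y) ∈ [0,1]² ∖ S. -/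
open MeasureTheory Filter Set

noncomputable section

/-- Lebesgue measure restricted to `[0,1]`. -/
def mu01 : Measure ℝ := volume.restrict (Set.Icc (0:ℝ) 1)

/-- A kernel: a symmetric measurable function `[0,1]² → [-1,1]`. -/
def IsKernel (W : ℝ → ℝ → ℝ) : Prop :=
  Measurable (Function.uncurry W) ∧ (∀ x y, W x y = W y x) ∧
    ∀ x y, W x y ∈ Set.Icc (-1:ℝ) 1

/-- A graphon: a symmetric measurable function `[0,1]² → [0,1]`. -/
def IsGraphon (W : ℝ → ℝ → ℝ) : Prop :=
  Measurable (Function.uncurry W) ∧ (∀ x y, W x y = W y x) ∧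
    ∀ x y, W x y ∈ Set.Icc (0:ℝ) 1

/-- `g ∈ L∞([0,1])`: measurable and essentially bounded on `[0,1]`. -/
def IsLinf (g : ℝ → ℝ) : Prop :=
  Measurable g ∧ ∃ M : ℝ, ∀ᵐ x ∂mu01, |g x| ≤ M

/-- A solution of the continuum voting model IVP for `(W, g)`: a jointly measurable
function, essentially bounded on `[0,1] × [0,T]` for every `T > 0`, satisfying the
integral form of the IVP for every `t ≥ 0` and almost every `x ∈ [0,1]`. -/
def IsSolution (W : ℝ → ℝ → ℝ) (g : ℝ → ℝ) (u : ℝ → ℝ → ℝ) : Prop :=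
  Measurable (Function.uncurry u) ∧
  (∀ T > (0:ℝ), ∃ M : ℝ, ∀ t ∈ Set.Icc (0:ℝ) T, ∀ᵐ x ∂mu01, |u x t| ≤ M) ∧
  (∀ t ≥ (0:ℝ), ∀ᵐ x ∂mu01,
    u x t = g x + ∫ s in Set.Icc (0:ℝ) t, ∫ y in Set.Icc (0:ℝ) 1, W x y * (u y s - u x s))

/-- A bounded solution: essentially uniformly bounded over all times `t ≥ 0`. -/
def BoundedSolution (u : ℝ → ℝ → ℝ) : Prop :=
  ∃ M : ℝ, ∀ t ≥ (0:ℝ), ∀ᵐ x ∂mu01, |u x t| ≤ M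

/-- `u` reaches consensus on `A`:
`lim_{t→∞} ess sup_{(x,y) ∈ A×A} |u(x,t) − u(y,t)| = 0`. -/
def ReachesConsensusOn (u : ℝ → ℝ → ℝ) (A : Set ℝ) : Prop :=
  ∀ ε > (0:ℝ), ∃ T : ℝ, ∀ t ≥ T,
    ∀ᵐ p : ℝ × ℝ ∂((volume.restrict A).prod (volume.restrict A)),
      |u p.1 t - u p.2 t| ≤ ε

open Classical in
/-- `u*(x) = lim_{t→∞} u(x,t)` where the limit exists, and `0` otherwise. -/
def uStar (u : ℝ → ℝ → ℝ) (x : ℝ) : ℝ :=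
  if h : ∃ L : ℝ, Filter.Tendsto (fun t => u x t) Filter.atTop (nhds L)
  then h.choose else 0

/-- The normalised degree function of a kernel. -/
def degW (W : ℝ → ℝ → ℝ) (x : ℝ) : ℝ := ∫ y in Set.Icc (0:ℝ) 1, W x y

/-- The block `I_iⁿ = ((i−1)/n, i/n]` containing `x`, i.e. with `i = ⌈n x⌉`. -/
def blockIoc (n : ℕ) (x : ℝ) : Set ℝ :=
  Set.Ioc (((⌈(n : ℝ) * x⌉ : ℤ) : ℝ) / n - 1 / n) (((⌈(n : ℝ) * x⌉ : ℤ) : ℝ) / n)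

/-- The block average of `g`: `g_n(x) = n ∫_{I_iⁿ} g` for `x ∈ I_iⁿ`. -/
def blockAvgG (n : ℕ) (g : ℝ → ℝ) (x : ℝ) : ℝ :=
  (n : ℝ) * ∫ y in blockIoc n x, g y

/-- The block average of `W`: `W_n(x,y) = n² ∫_{I_iⁿ × I_jⁿ} W` for `(x,y) ∈ I_iⁿ × I_jⁿ`. -/
def blockAvgW (n : ℕ) (W : ℝ → ℝ → ℝ) (x y : ℝ) : ℝ :=
  (n : ℝ) ^ 2 * ∫ p in (blockIoc n x) ×ˢ (blockIoc n y), W p.1 p.2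

/-- The `L²([0,1])` norm. -/
def L2normI (f : ℝ → ℝ) : ℝ := Real.sqrt (∫ x in Set.Icc (0:ℝ) 1, (f x) ^ 2)

/-- The `L²([0,1]²)` norm. -/
def L2normSq (F : ℝ → ℝ → ℝ) : ℝ :=
  Real.sqrt (∫ p in (Set.Icc (0:ℝ) 1) ×ˢ (Set.Icc (0:ℝ) 1), (F p.1 p.2) ^ 2)

/-- `A` is a twin-set of `W`. -/
def IsTwinSet (W : ℝ → ℝ → ℝ) (A : Set ℝ) : Prop :=
  MeasurableSet A ∧ A ⊆ Set.Icc (0:ℝ) 1 ∧ 0 < volume A ∧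
  ∃ a : ℝ → ℝ → ℝ, ∀ x ∈ A, ∀ x' ∈ A,
    ∀ᵐ y ∂mu01, W x y = a x x' * W x' y

/-- `A` is a maximal twin-set of `W`. -/
def IsMaximalTwinSet (W : ℝ → ℝ → ℝ) (A : Set ℝ) : Prop :=
  IsTwinSet W A ∧ ∀ B : Set ℝ, IsTwinSet W B → A ⊆ B → volume (symmDiff B A) = 0

/-- A kernel is connected if every measurable `S ⊆ [0,1]` with `0 < λ(S) < 1` satisfies
`∫_{S × ([0,1]∖S)} |W| > 0`. -/
def ConnectedKernel (W : ℝ → ℝ → ℝ) : Prop :=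
  ∀ S : Set ℝ, MeasurableSet S → S ⊆ Set.Icc (0:ℝ) 1 →
    0 < volume S → volume S < 1 →
    0 < ∫ p in S ×ˢ (Set.Icc (0:ℝ) 1 \ S), |W p.1 p.2|

/-- A twin-graphon: a graphon with finitely many maximal twin-sets covering `[0,1]`
up to a null set. -/
def IsTwinGraphon (W : ℝ → ℝ → ℝ) : Prop :=
  IsGraphon W ∧ ∃ (n : ℕ) (A : Fin n → Set ℝ),
    (∀ i, IsMaximalTwinSet W (A i)) ∧
    volume (symmDiff (Set.Icc (0:ℝ) 1) (⋃ i, A i)) = 0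


/-!
The voting dynamics are stable in `L¹`: subtracting the integral equations of two solutions and
splitting `W₁ (δf₁) - W₂ (δf₂) = W₁ (δf₁ - δf₂) + (W₁ - W₂) δf₂`, where `δf = f(y) - f(x)`, bounds
`‖u₁(t) - u₂(t)‖₁` through Grönwall's inequality by the `L¹` distances of the initial data and of
the kernels, with a constant depending only on the kernel bound, the time horizon and `sup |u₂|`.
By Lebesgue differentiation and dominated convergence the block averages converge in `L¹`, so
`uₙ → u` in `L¹` uniformly on `[0, T + D]`. When `u(·, t)` is within `ε / 2` of consensus, a pair
with `|uₙ(x,t) - uₙ(y,t)| > ε` satisfies `|uₙ(x,t) - u(x,t)| + |uₙ(y,t) - u(y,t)| > ε / 2`, and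
Markov's inequality makes the set of such pairs small.
-/

open scoped Topology

theorem le_mul_exp_of_le_add_mul_integral {φ : ℝ → ℝ} {A K a b : ℝ} (hK : 0 ≤ K)
    (hφ : IntegrableOn φ (Icc a b)) (h : ∀ t ∈ Icc a b, φ t ≤ A + K * ∫ s in Icc a t, φ s) :
    ∀ t ∈ Icc a b, φ t ≤ A * Real.exp (K * (t - a)) := by
  have hψ : ∀ c d, IntervalIntegrable ((Icc a b).indicator φ) volume c d := fun c d =>
    (hφ.integrable_indicator measurableSet_Icc).intervalIntegrable
  set Φ : ℝ → ℝ := fun t => A + K * ∫ s in a..t, (Icc a b).indicator φ s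
  have hΦ_cont : Continuous Φ := by
    have := intervalIntegral.continuous_primitive hψ a
    fun_prop
  have hφ_le : ∀ t ∈ Icc a b, φ t ≤ Φ t := fun t ht => by
    have hΦ_eq : ∫ s in a..t, (Icc a b).indicator φ s = ∫ s in Icc a t, φ s := by
      rw [intervalIntegral.integral_of_le ht.1, ← integral_Icc_eq_integral_Ioc,
        setIntegral_indicator measurableSet_Icc, inter_eq_left.2 (Icc_subset_Icc_right ht.2)]
    simpa only [Φ, hΦ_eq] using h t ht
  -- The primitive of `Φ` is differentiable, so the differential Grönwall inequality applies to it.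
  set H : ℝ → ℝ := fun t => ∫ s in a..t, Φ s
  have hH : ∀ t, HasDerivAt H (Φ t) t := fun t =>
    (hΦ_cont.integral_hasStrictDerivAt a t).hasDerivAt
  have hΦ_le : ∀ t ∈ Icc a b, Φ t ≤ K * H t + A := fun t ht => by
    have hmono : ∫ s in a..t, (Icc a b).indicator φ s ≤ H t := by
      refine intervalIntegral.integral_mono_on ht.1 (hψ _ _) (hΦ_cont.intervalIntegrable _ _) ?_
      intro s hs
      have hs' : s ∈ Icc a b := ⟨hs.1, hs.2.trans ht.2⟩
      simpa only [indicator_of_mem hs'] using hφ_le s hs'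
    linarith [mul_le_mul_of_nonneg_left hmono hK]
  have hH_le : ∀ t ∈ Icc a b, H t ≤ gronwallBound 0 K A (t - a) :=
    le_gronwallBound_of_liminf_deriv_right_le (f' := Φ)
      (fun t _ => (hH t).continuousAt.continuousWithinAt)
      (fun t _ _ hr => (hH t).hasDerivWithinAt.liminf_right_slope_le hr)
      (by simp [H]) fun t ht => hΦ_le t (Ico_subset_Icc_self ht)
  intro t ht
  calc φ t ≤ K * H t + A := (hφ_le t ht).trans (hΦ_le t ht)
    _ ≤ K * gronwallBound 0 K A (t - a) + A := by gcongr; exact hH_le t ht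
    _ = A * Real.exp (K * (t - a)) := by
      rcases eq_or_ne K 0 with rfl | hK
      · simp
      · rw [gronwallBound_of_K_ne_0 hK]
        field_simp
        ring

section VotingModel

variable {α β : Type*} [MeasurableSpace α] [MeasurableSpace β] {μ : Measure α}

/-- The right-hand side `x ↦ ∫ W(x,y) (f(y) - f(x)) dμ(y)` of the voting model on `(α, μ)` when the
current opinion profile is `f`. -/
def votingDrift (μ : Measure α) (W : α → α → ℝ) (f : α → ℝ) (x : α) : ℝ :=
  ∫ y, W x y * (f y - f x) ∂μ

/-- A measurable, not necessarily symmetric function with values in `[-K, K]`: the interaction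
weights of a voting model. -/
structure IsBoundedKernel (K : ℝ) (W : α → α → ℝ) : Prop where
  measurable : Measurable (Function.uncurry W)
  abs_le : ∀ x y, |W x y| ≤ K

/-- A solution on the time interval `[0, T]` of the voting model on `(α, μ)`. In contrast to
`IsSolution`, the bound `M` holds at every point and not just almost everywhere, so that sections
of `u` in either variable are bounded. -/
structure IsBoundedSolutionOn (μ : Measure α) (W : α → α → ℝ) (g : α → ℝ) (T M : ℝ)
    (u : α → ℝ → ℝ) : Prop where
  measurable : Measurable (Function.uncurry u)
  abs_le : ∀ x t, |u x t| ≤ M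
  ae_eq : ∀ t ∈ Icc 0 T, ∀ᵐ x ∂μ, u x t = g x + ∫ s in Icc 0 t, votingDrift μ W (u · s) x

lemma integrable_of_abs_le [IsFiniteMeasure μ] {f : α → ℝ} {C : ℝ} (hf : Measurable f)
    (hC : ∀ x, |f x| ≤ C) : Integrable f μ :=
  .of_bound hf.aestronglyMeasurable C (.of_forall hC)

lemma integral_abs_integral_sub_le [SFinite μ] {ν : Measure β} [SFinite ν] {F G : α × β → ℝ}
    (hF : Integrable F (μ.prod ν)) (hG : Integrable G (μ.prod ν)) :
    ∫ x, |∫ y, F (x, y) ∂ν - ∫ y, G (x, y) ∂ν| ∂μ ≤ ∫ p, |F p - G p| ∂μ.prod ν := by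
  have hFG : Integrable (fun p => |F p - G p|) (μ.prod ν) := (hF.sub hG).abs
  rw [integral_prod _ hFG]
  refine integral_mono_ae (hF.integral_prod_left.sub hG.integral_prod_left).abs
    hFG.integral_prod_left ?_
  filter_upwards [hF.prod_right_ae, hG.prod_right_ae] with x hFx hGx
  rw [← integral_sub hFx hGx]
  exact abs_integral_le_integral_abs

lemma abs_sub_le_two_mul {a b M : ℝ} (ha : |a| ≤ M) (hb : |b| ≤ M) : |a - b| ≤ 2 * M := by
  linarith [abs_sub a b]

namespace IsBoundedKernel

variable {K M : ℝ} {W W₁ W₂ : α → α → ℝ} {f f₁ f₂ : α → ℝ}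

lemma nonneg [Nonempty α] (hW : IsBoundedKernel K W) : 0 ≤ K :=
  let ⟨x⟩ := ‹Nonempty α›
  (abs_nonneg _).trans (hW.abs_le x x)

lemma abs_mul_sub_le (hW : IsBoundedKernel K W) (hf : ∀ x, |f x| ≤ M) (x y : α) :
    |W x y * (f y - f x)| ≤ K * (2 * M) := by
  have : Nonempty α := ⟨x⟩
  rw [abs_mul]
  exact mul_le_mul (hW.abs_le x y) (abs_sub_le_two_mul (hf y) (hf x)) (abs_nonneg _) hW.nonneg

lemma abs_votingDrift_le [IsProbabilityMeasure μ] (hW : IsBoundedKernel K W)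
    (hf : ∀ x, |f x| ≤ M) (x : α) : |votingDrift μ W f x| ≤ K * (2 * M) := by
  simpa [votingDrift] using
    norm_integral_le_of_norm_le_const (μ := μ) (f := fun y => W x y * (f y - f x))
      (.of_forall (hW.abs_mul_sub_le hf x))

lemma measurable_votingDrift [SFinite μ] (hW : IsBoundedKernel K W) {u : α → β → ℝ}
    (hu : Measurable (Function.uncurry u)) :
    Measurable fun p : α × β => votingDrift μ W (u · p.2) p.1 := by
  have hWm := hW.measurable
  have hint : Measurable fun q : (α × β) × α => W q.1.1 q.2 * (u q.2 q.1.2 - u q.1.1 q.1.2) := by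
    fun_prop
  exact hint.stronglyMeasurable.integral_prod_right'.measurable

lemma abs_mul_sub_sub_mul_sub_le (hW₁ : IsBoundedKernel K W₁) (hf₂ : ∀ x, |f₂ x| ≤ M) (x y : α) :
    |W₁ x y * (f₁ y - f₁ x) - W₂ x y * (f₂ y - f₂ x)| ≤
      K * (|f₁ x - f₂ x| + |f₁ y - f₂ y|) + 2 * M * |W₁ x y - W₂ x y| := by
  have hsplit : W₁ x y * (f₁ y - f₁ x) - W₂ x y * (f₂ y - f₂ x) =
      W₁ x y * ((f₁ y - f₂ y) - (f₁ x - f₂ x)) + (W₁ x y - W₂ x y) * (f₂ y - f₂ x) := by ring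
  rw [hsplit]
  refine (abs_add_le _ _).trans (add_le_add ?_ ?_)
  · rw [abs_mul, add_comm]
    have : Nonempty α := ⟨x⟩
    exact mul_le_mul (hW₁.abs_le x y) (abs_sub _ _) (abs_nonneg _) hW₁.nonneg
  · rw [abs_mul, mul_comm]
    exact mul_le_mul_of_nonneg_right (abs_sub_le_two_mul (hf₂ y) (hf₂ x)) (abs_nonneg _)

lemma integral_abs_votingDrift_sub_le [IsProbabilityMeasure μ] {M₁ M₂ : ℝ}
    (hW₁ : IsBoundedKernel K W₁) (hW₂ : IsBoundedKernel K W₂)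
    (hf₁ : Measurable f₁) (hf₂ : Measurable f₂) (hM₁ : ∀ x, |f₁ x| ≤ M₁) (hM₂ : ∀ x, |f₂ x| ≤ M₂) :
    ∫ x, |votingDrift μ W₁ f₁ x - votingDrift μ W₂ f₂ x| ∂μ ≤
      2 * K * ∫ x, |f₁ x - f₂ x| ∂μ +
        2 * M₂ * ∫ p, |W₁ p.1 p.2 - W₂ p.1 p.2| ∂μ.prod μ := by
  have hW₁m := hW₁.measurable
  have hW₂m := hW₂.measurable
  have hint₁ : Integrable (fun p : α × α => W₁ p.1 p.2 * (f₁ p.2 - f₁ p.1)) (μ.prod μ) :=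
    integrable_of_abs_le (by fun_prop) fun p => hW₁.abs_mul_sub_le hM₁ p.1 p.2
  have hint₂ : Integrable (fun p : α × α => W₂ p.1 p.2 * (f₂ p.2 - f₂ p.1)) (μ.prod μ) :=
    integrable_of_abs_le (by fun_prop) fun p => hW₂.abs_mul_sub_le hM₂ p.1 p.2
  have hf : Integrable (fun x => |f₁ x - f₂ x|) μ :=
    ((integrable_of_abs_le hf₁ hM₁).sub (integrable_of_abs_le hf₂ hM₂)).abs
  have hW : Integrable (fun p : α × α => |W₁ p.1 p.2 - W₂ p.1 p.2|) (μ.prod μ) :=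
    ((integrable_of_abs_le hW₁m fun p => hW₁.abs_le p.1 p.2).sub
      (integrable_of_abs_le hW₂m fun p => hW₂.abs_le p.1 p.2)).abs
  have hff : Integrable (fun p : α × α => |f₁ p.1 - f₂ p.1| + |f₁ p.2 - f₂ p.2|) (μ.prod μ) :=
    (hf.comp_fst μ).add (hf.comp_snd μ)
  calc ∫ x, |votingDrift μ W₁ f₁ x - votingDrift μ W₂ f₂ x| ∂μ
      ≤ ∫ p, |W₁ p.1 p.2 * (f₁ p.2 - f₁ p.1) - W₂ p.1 p.2 * (f₂ p.2 - f₂ p.1)| ∂μ.prod μ :=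
        integral_abs_integral_sub_le hint₁ hint₂
    _ ≤ ∫ p, (K * (|f₁ p.1 - f₂ p.1| + |f₁ p.2 - f₂ p.2|) +
          2 * M₂ * |W₁ p.1 p.2 - W₂ p.1 p.2|) ∂μ.prod μ :=
        integral_mono (hint₁.sub hint₂).abs ((hff.const_mul K).add (hW.const_mul _))
          fun p => hW₁.abs_mul_sub_sub_mul_sub_le hM₂ p.1 p.2
    _ = 2 * K * ∫ x, |f₁ x - f₂ x| ∂μ +
          2 * M₂ * ∫ p, |W₁ p.1 p.2 - W₂ p.1 p.2| ∂μ.prod μ := by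
        rw [integral_add (hff.const_mul K) (hW.const_mul _), integral_const_mul,
          integral_const_mul, integral_add (hf.comp_fst μ) (hf.comp_snd μ),
          integral_fun_fst fun x => |f₁ x - f₂ x|, integral_fun_snd fun x => |f₁ x - f₂ x|]
        simp only [probReal_univ, one_smul]
        ring

end IsBoundedKernel

namespace IsBoundedSolutionOn

variable {K T M M₁ M₂ : ℝ} {W W₁ W₂ : α → α → ℝ} {g g₁ g₂ : α → ℝ} {u u₁ u₂ : α → ℝ → ℝ}

lemma ae_eq_initial (hu : IsBoundedSolutionOn μ W g T M u) (hT : 0 ≤ T) :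
    (u · 0) =ᵐ[μ] g := by
  filter_upwards [hu.ae_eq 0 ⟨le_rfl, hT⟩] with x hx
  simpa using hx

lemma integrable_at [IsFiniteMeasure μ] (hu : IsBoundedSolutionOn μ W g T M u) (t : ℝ) :
    Integrable (u · t) μ :=
  integrable_of_abs_le (hu.measurable.of_uncurry_right) fun x => hu.abs_le x t

lemma integrable_initial [IsFiniteMeasure μ] (hu : IsBoundedSolutionOn μ W g T M u) (hT : 0 ≤ T) :
    Integrable g μ :=
  (hu.integrable_at 0).congr (hu.ae_eq_initial hT)

lemma integrable_votingDrift [IsProbabilityMeasure μ] (hW : IsBoundedKernel K W)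
    (hu : IsBoundedSolutionOn μ W g T M u) (t : ℝ) :
    Integrable (fun p : α × ℝ => votingDrift μ W (u · p.2) p.1)
      (μ.prod (volume.restrict (Icc 0 t))) :=
  integrable_of_abs_le (hW.measurable_votingDrift hu.measurable)
    fun p => hW.abs_votingDrift_le (hu.abs_le · p.2) p.1

lemma integral_abs_sub_le_add_integral_votingDrift [IsProbabilityMeasure μ]
    (hW₁ : IsBoundedKernel K W₁) (hW₂ : IsBoundedKernel K W₂)
    (hu₁ : IsBoundedSolutionOn μ W₁ g₁ T M₁ u₁) (hu₂ : IsBoundedSolutionOn μ W₂ g₂ T M₂ u₂)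
    {t : ℝ} (ht : t ∈ Icc 0 T) :
    ∫ x, |u₁ x t - u₂ x t| ∂μ ≤ ∫ x, |g₁ x - g₂ x| ∂μ +
      ∫ s in Icc 0 t, ∫ x, |votingDrift μ W₁ (u₁ · s) x - votingDrift μ W₂ (u₂ · s) x| ∂μ := by
  have hT : 0 ≤ T := ht.1.trans ht.2
  have hd₁ := hu₁.integrable_votingDrift hW₁ t
  have hd₂ := hu₂.integrable_votingDrift hW₂ t
  have hg : Integrable (fun x => |g₁ x - g₂ x|) μ :=
    ((hu₁.integrable_initial hT).sub (hu₂.integrable_initial hT)).abs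
  have hd : Integrable (fun p : α × ℝ => |votingDrift μ W₁ (u₁ · p.2) p.1 -
      votingDrift μ W₂ (u₂ · p.2) p.1|) (μ.prod (volume.restrict (Icc 0 t))) := (hd₁.sub hd₂).abs
  calc ∫ x, |u₁ x t - u₂ x t| ∂μ
      ≤ ∫ x, (|g₁ x - g₂ x| + ∫ s in Icc 0 t,
          |votingDrift μ W₁ (u₁ · s) x - votingDrift μ W₂ (u₂ · s) x|) ∂μ := by
        refine integral_mono_ae ((hu₁.integrable_at t).sub (hu₂.integrable_at t)).abs
          (hg.add hd.integral_prod_left) ?_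
        filter_upwards [hu₁.ae_eq t ht, hu₂.ae_eq t ht, hd₁.prod_right_ae, hd₂.prod_right_ae]
          with x hx₁ hx₂ hdx₁ hdx₂
        rw [hx₁, hx₂, add_sub_add_comm, ← integral_sub hdx₁ hdx₂]
        exact (abs_add_le _ _).trans (add_le_add_right abs_integral_le_integral_abs _)
    _ = _ := by
        rw [integral_add hg hd.integral_prod_left, integral_integral_swap hd]

lemma integrableOn_integral_abs_sub [IsFiniteMeasure μ]
    (hu₁ : IsBoundedSolutionOn μ W₁ g₁ T M₁ u₁) (hu₂ : IsBoundedSolutionOn μ W₂ g₂ T M₂ u₂)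
    (t : ℝ) : IntegrableOn (fun s => ∫ x, |u₁ x s - u₂ x s| ∂μ) (Icc 0 t) := by
  have hdiff : Integrable (fun p : α × ℝ => |u₁ p.1 p.2 - u₂ p.1 p.2|)
      (μ.prod (volume.restrict (Icc 0 t))) :=
    ((integrable_of_abs_le hu₁.measurable fun p => hu₁.abs_le p.1 p.2).sub
      (integrable_of_abs_le hu₂.measurable fun p => hu₂.abs_le p.1 p.2)).abs
  exact hdiff.integral_prod_right

variable [IsProbabilityMeasure μ]

lemma bound_nonneg (hu : IsBoundedSolutionOn μ W g T M u) : 0 ≤ M :=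
  let ⟨x⟩ := μ.nonempty_of_neZero
  (abs_nonneg _).trans (hu.abs_le x 0)

lemma integral_abs_sub_le_add_mul_integral
    (hW₁ : IsBoundedKernel K W₁) (hW₂ : IsBoundedKernel K W₂)
    (hu₁ : IsBoundedSolutionOn μ W₁ g₁ T M₁ u₁) (hu₂ : IsBoundedSolutionOn μ W₂ g₂ T M₂ u₂)
    {t : ℝ} (ht : t ∈ Icc 0 T) :
    ∫ x, |u₁ x t - u₂ x t| ∂μ ≤
      ∫ x, |g₁ x - g₂ x| ∂μ + T * (2 * M₂ * ∫ p, |W₁ p.1 p.2 - W₂ p.1 p.2| ∂μ.prod μ) +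
        2 * K * ∫ s in Icc 0 t, ∫ x, |u₁ x s - u₂ x s| ∂μ := by
  set w := 2 * M₂ * ∫ p, |W₁ p.1 p.2 - W₂ p.1 p.2| ∂μ.prod μ
  have hw : 0 ≤ w :=
    mul_nonneg (by linarith [hu₂.bound_nonneg]) (integral_nonneg fun p => abs_nonneg _)
  have hdist := (hu₁.integrableOn_integral_abs_sub hu₂ t).const_mul (2 * K)
  have hdrift : ∫ s in Icc 0 t,
      ∫ x, |votingDrift μ W₁ (u₁ · s) x - votingDrift μ W₂ (u₂ · s) x| ∂μ ≤
        ∫ s in Icc 0 t, (2 * K * ∫ x, |u₁ x s - u₂ x s| ∂μ + w) := by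
    refine integral_mono ((hu₁.integrable_votingDrift hW₁ t).sub
      (hu₂.integrable_votingDrift hW₂ t)).abs.integral_prod_right
      (hdist.add (integrable_const _)) fun s => ?_
    exact hW₁.integral_abs_votingDrift_sub_le hW₂ hu₁.measurable.of_uncurry_right
      hu₂.measurable.of_uncurry_right (hu₁.abs_le · s) (hu₂.abs_le · s)
  rw [integral_add hdist (integrable_const _), integral_const_mul] at hdrift
  have hconst : ∫ _ in Icc 0 t, w ≤ T * w := by
    simpa [measureReal_def, ht.1] using mul_le_mul_of_nonneg_right ht.2 hw
  linarith [integral_abs_sub_le_add_integral_votingDrift hW₁ hW₂ hu₁ hu₂ ht]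

theorem integral_abs_sub_le_mul_exp
    (hW₁ : IsBoundedKernel K W₁) (hW₂ : IsBoundedKernel K W₂)
    (hu₁ : IsBoundedSolutionOn μ W₁ g₁ T M₁ u₁) (hu₂ : IsBoundedSolutionOn μ W₂ g₂ T M₂ u₂)
    {t : ℝ} (ht : t ∈ Icc 0 T) :
    ∫ x, |u₁ x t - u₂ x t| ∂μ ≤
      (∫ x, |g₁ x - g₂ x| ∂μ + T * (2 * M₂ * ∫ p, |W₁ p.1 p.2 - W₂ p.1 p.2| ∂μ.prod μ)) *
        Real.exp (2 * K * t) := by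
  have : Nonempty α := μ.nonempty_of_neZero
  have hK : 0 ≤ 2 * K := by linarith [hW₁.nonneg]
  simpa only [sub_zero] using
    le_mul_exp_of_le_add_mul_integral hK (hu₁.integrableOn_integral_abs_sub hu₂ T)
      (fun s hs => integral_abs_sub_le_add_mul_integral hW₁ hW₂ hu₁ hu₂ hs) t ht

end IsBoundedSolutionOn

end VotingModel

instance isProbabilityMeasure_mu01 : IsProbabilityMeasure mu01 := ⟨by simp [mu01]⟩

namespace IsSolution

variable {K T t : ℝ} {W : ℝ → ℝ → ℝ} {g : ℝ → ℝ} {u : ℝ → ℝ → ℝ}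

lemma integrable_at (hu : IsSolution W g u) (ht : 0 ≤ t) : Integrable (u · t) mu01 := by
  obtain ⟨hum, hbdd, -⟩ := hu
  obtain ⟨M, hM⟩ := hbdd (t + 1) (by linarith)
  exact .of_bound hum.of_uncurry_right.aestronglyMeasurable M (hM t ⟨ht, by linarith⟩)

lemma exists_isBoundedSolutionOn (hu : IsSolution W g u) (hT : 0 < T) :
    ∃ M v, IsBoundedSolutionOn mu01 W g T M v ∧ ∀ t ∈ Icc 0 T, (v · t) =ᵐ[mu01] (u · t) := by
  obtain ⟨hum, hbdd, heq⟩ := hu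
  obtain ⟨M, hM⟩ := hbdd T hT
  -- Truncation at `M` alters each time slice of `u` only on a null set; by Fubini, almost every
  -- trajectory is then altered only on a null set of times.
  let v : ℝ → ℝ → ℝ := fun x t => if |u x t| ≤ M then u x t else 0
  have hvm : Measurable (Function.uncurry v) :=
    Measurable.ite (measurableSet_le hum.abs measurable_const) hum measurable_const
  have hvu : ∀ t ∈ Icc 0 T, (v · t) =ᵐ[mu01] (u · t) := fun t ht => by
    filter_upwards [hM t ht] with x hx using if_pos hx
  have hvu_section : ∀ᵐ x ∂mu01, ∀ᵐ s ∂volume.restrict (Icc 0 T), v x s = u x s := by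
    rw [Measure.ae_ae_comm]
    · filter_upwards [ae_restrict_mem measurableSet_Icc] with s hs using hvu s hs
    · exact measurableSet_eq_fun hvm hum
  refine ⟨max M 0, v, ⟨hvm, fun x t => ?_, fun t ht => ?_⟩, hvu⟩
  · by_cases hx : |u x t| ≤ M <;> simp [v, hx]
  · filter_upwards [hvu_section, hvu t ht, heq t ht.1] with x hx hxt hut
    rw [hxt, hut]
    refine congrArg _ (integral_congr_ae ?_)
    filter_upwards [ae_restrict_of_ae_restrict_of_subset (Icc_subset_Icc_right ht.2) hx,
      ae_restrict_mem measurableSet_Icc] with s hxs hs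
    refine integral_congr_ae ?_
    filter_upwards [hvu s ⟨hs.1, hs.2.trans ht.2⟩] with y hy
    rw [hxs, hy]

theorem exists_integral_abs_sub_le (hW : IsBoundedKernel K W) (hu : IsSolution W g u)
    (hT : 0 < T) :
    ∃ C, ∀ W' g' u', IsBoundedKernel K W' → IsSolution W' g' u' → ∀ t ∈ Icc 0 T,
      ∫ x, |u' x t - u x t| ∂mu01 ≤
        C * (∫ x, |g' x - g x| ∂mu01 + ∫ p, |W' p.1 p.2 - W p.1 p.2| ∂mu01.prod mu01) := by
  obtain ⟨M, v, hv, hvu⟩ := hu.exists_isBoundedSolutionOn hT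
  refine ⟨(1 + T * (2 * M)) * Real.exp (2 * K * T), fun W' g' u' hW' hu' t ht => ?_⟩
  obtain ⟨M', v', hv', hvu'⟩ := hu'.exists_isBoundedSolutionOn hT
  have hK : 0 ≤ K := hW.nonneg
  have hM : 0 ≤ M := hv.bound_nonneg
  have hdg : 0 ≤ ∫ x, |g' x - g x| ∂mu01 := integral_nonneg fun _ => abs_nonneg _
  have hdW : 0 ≤ ∫ p, |W' p.1 p.2 - W p.1 p.2| ∂mu01.prod mu01 :=
    integral_nonneg fun _ => abs_nonneg _
  calc ∫ x, |u' x t - u x t| ∂mu01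
      = ∫ x, |v' x t - v x t| ∂mu01 := by
        refine integral_congr_ae ?_
        filter_upwards [hvu t ht, hvu' t ht] with x hx hx'
        rw [hx, hx']
    _ ≤ _ := hv'.integral_abs_sub_le_mul_exp hW' hW hv ht
    _ ≤ ((1 + T * (2 * M)) * (∫ x, |g' x - g x| ∂mu01 +
          ∫ p, |W' p.1 p.2 - W p.1 p.2| ∂mu01.prod mu01)) * Real.exp (2 * K * T) := by
        gcongr
        · nlinarith [mul_nonneg hT.le hM]
        · exact ht.2
    _ = _ := by ring

end IsSolution

section BlockAverages

lemma abs_average_le {α : Type*} [MeasurableSpace α] {μ : Measure α} {f : α → ℝ} {C : ℝ}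
    (hC : 0 ≤ C) (hf : ∀ᵐ x ∂μ, |f x| ≤ C) : |⨍ x, f x ∂μ| ≤ C := by
  have hf' : ∀ᵐ x ∂(μ univ)⁻¹ • μ, ‖f x‖ ≤ C := Measure.smul_absolutelyContinuous.ae_le hf
  rw [average]
  refine (norm_integral_le_of_norm_le_const hf').trans ?_
  refine mul_le_of_le_one_right hC (ENNReal.toReal_le_of_le_ofReal zero_le_one ?_)
  simp [ENNReal.inv_mul_le_one]

lemma tendsto_integral_abs_sub_of_ae_tendsto {α : Type*} [MeasurableSpace α] {μ : Measure α}
    [IsFiniteMeasure μ] {F : ℕ → α → ℝ} {f : α → ℝ} {C : ℝ}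
    (hF : ∀ n, AEStronglyMeasurable (F n) μ) (hC : ∀ n, ∀ᵐ x ∂μ, |F n x| ≤ C)
    (hlim : ∀ᵐ x ∂μ, Tendsto (F · x) atTop (𝓝 (f x))) :
    Tendsto (fun n => ∫ x, |F n x - f x| ∂μ) atTop (𝓝 0) := by
  have hf : AEStronglyMeasurable f μ := aestronglyMeasurable_of_tendsto_ae atTop hF hlim
  have hdom : ∀ n, ∀ᵐ x ∂μ, ‖|F n x - f x|‖ ≤ 2 * C := fun n => by
    filter_upwards [ae_all_iff.2 hC, hlim] with x hx hfx
    rw [Real.norm_eq_abs, abs_abs]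
    exact abs_sub_le_two_mul (hx n) (le_of_tendsto' hfx.abs hx)
  have hzero : ∀ᵐ x ∂μ, Tendsto (fun n => |F n x - f x|) atTop (𝓝 0) := by
    filter_upwards [hlim] with x hx
    simpa using (hx.sub_const (f x)).abs
  simpa using tendsto_integral_of_dominated_convergence (fun _ => 2 * C)
    (fun n => ((hF n).sub hf).norm) (integrable_const _) hdom hzero

/-- The midpoint of the block `blockIoc n x`. It exhibits the block, up to a null set, as the closed
ball of radius `1 / (2 * n)` around a point, the form in which the Lebesgue differentiation theorem
is available. -/
def blockCenter (n : ℕ) (x : ℝ) : ℝ := ⌈(n : ℝ) * x⌉ / n - 1 / (2 * n)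

lemma blockIoc_ae_eq_closedBall (n : ℕ) (x : ℝ) :
    blockIoc n x =ᵐ[volume] Metric.closedBall (blockCenter n x) (1 / (2 * n)) := by
  have hball : Metric.closedBall (blockCenter n x) (1 / (2 * n)) =
      Icc ((⌈(n : ℝ) * x⌉ : ℝ) / n - 1 / n) (⌈(n : ℝ) * x⌉ / n) := by
    rw [Real.closedBall_eq_Icc, blockCenter]
    congr 1 <;> ring
  rw [hball]
  exact Ioc_ae_eq_Icc

lemma mem_closedBall_blockCenter {n : ℕ} (hn : 0 < n) (x : ℝ) :
    x ∈ Metric.closedBall (blockCenter n x) (1 / (2 * n)) := by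
  have hn' : (0 : ℝ) < n := Nat.cast_pos.2 hn
  have hlower : (⌈(n : ℝ) * x⌉ - 1 : ℝ) / n ≤ x := by
    rw [div_le_iff₀ hn']
    linarith [Int.ceil_lt_add_one ((n : ℝ) * x)]
  have hupper : x ≤ ⌈(n : ℝ) * x⌉ / n := by
    rw [le_div_iff₀ hn']
    linarith [Int.le_ceil ((n : ℝ) * x)]
  rw [Real.closedBall_eq_Icc, blockCenter]
  constructor
  · calc _ = (⌈(n : ℝ) * x⌉ - 1 : ℝ) / n := by ring
      _ ≤ x := hlower
  · linarith

lemma blockIoc_subset_Icc {n : ℕ} (hn : 0 < n) {x : ℝ} (hx : x ∈ Ioc (0 : ℝ) 1) :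
    blockIoc n x ⊆ Icc 0 1 := by
  have hn' : (0 : ℝ) < n := Nat.cast_pos.2 hn
  have hceil_pos : (1 : ℝ) ≤ ⌈(n : ℝ) * x⌉ := by
    exact_mod_cast Int.ceil_pos.2 (mul_pos hn' hx.1)
  have hceil_le : (⌈(n : ℝ) * x⌉ : ℝ) ≤ n := by
    exact_mod_cast Int.ceil_le.2 (mul_le_of_le_one_right hn'.le hx.2)
  rintro y ⟨hy₁, hy₂⟩
  rw [← sub_div] at hy₁
  exact ⟨(div_nonneg (by linarith) hn'.le).trans hy₁.le, hy₂.trans ((div_le_one hn').2 hceil_le)⟩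

lemma tendsto_one_div_two_mul_natCast :
    Tendsto (fun n : ℕ => 1 / (2 * (n : ℝ))) atTop (𝓝[>] 0) := by
  refine tendsto_nhdsWithin_iff.2 ⟨?_, ?_⟩
  · simpa only [one_div, mul_inv, mul_zero] using
      (tendsto_inv_atTop_nhds_zero_nat (𝕜 := ℝ)).const_mul 2⁻¹
  · filter_upwards [eventually_gt_atTop 0] with n hn
    simpa using hn

lemma blockAvgG_eq_setAverage (n : ℕ) (f : ℝ → ℝ) (x : ℝ) :
    blockAvgG n f x = ⨍ y in Metric.closedBall (blockCenter n x) (1 / (2 * n)), f y := by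
  have hvol : volume.real (Metric.closedBall (blockCenter n x) (1 / (2 * n))) = (n : ℝ)⁻¹ := by
    rw [Real.volume_real_closedBall (by positivity)]
    ring
  rw [setAverage_eq, hvol, inv_inv, smul_eq_mul, blockAvgG,
    setIntegral_congr_set (blockIoc_ae_eq_closedBall n x)]

lemma blockAvgW_eq_setAverage (n : ℕ) (W : ℝ → ℝ → ℝ) (x y : ℝ) :
    blockAvgW n W x y =
      ⨍ p in Metric.closedBall (blockCenter n x, blockCenter n y) (1 / (2 * n)), W p.1 p.2 := by
  have hvol : volume.real (Metric.closedBall (blockCenter n x, blockCenter n y) (1 / (2 * n))) =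
      ((n : ℝ) ^ 2)⁻¹ := by
    rw [← closedBall_prod_same, Measure.volume_eq_prod, measureReal_prod_prod,
      Real.volume_real_closedBall (by positivity), Real.volume_real_closedBall (by positivity)]
    ring
  have hblock : blockIoc n x ×ˢ blockIoc n y =ᵐ[volume]
      Metric.closedBall (blockCenter n x, blockCenter n y) (1 / (2 * (n : ℝ))) := by
    rw [← closedBall_prod_same]
    exact Measure.set_prod_ae_eq (blockIoc_ae_eq_closedBall n x) (blockIoc_ae_eq_closedBall n y)
  rw [setAverage_eq, hvol, inv_inv, smul_eq_mul, blockAvgW, setIntegral_congr_set hblock]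

lemma measurable_blockAvgG (n : ℕ) (f : ℝ → ℝ) : Measurable (blockAvgG n f) := by
  let avg : ℤ → ℝ := fun k => n * ∫ y in Ioc ((k : ℝ) / n - 1 / n) (k / n), f y
  have havg : Measurable avg := measurable_of_countable avg
  exact havg.comp (Int.measurable_ceil.comp (measurable_const_mul _))

lemma measurable_blockAvgW (n : ℕ) (W : ℝ → ℝ → ℝ) :
    Measurable (Function.uncurry (blockAvgW n W)) := by
  let avg : ℤ × ℤ → ℝ := fun k => (n : ℝ) ^ 2 * ∫ p in
    Ioc ((k.1 : ℝ) / n - 1 / n) (k.1 / n) ×ˢ Ioc ((k.2 : ℝ) / n - 1 / n) (k.2 / n), W p.1 p.2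
  have havg : Measurable avg := measurable_of_countable avg
  have hceil : Measurable fun p : ℝ × ℝ => (⌈(n : ℝ) * p.1⌉, ⌈(n : ℝ) * p.2⌉) :=
    (Int.measurable_ceil.comp (measurable_const.mul measurable_fst)).prodMk
      (Int.measurable_ceil.comp (measurable_const.mul measurable_snd))
  have hcomp : Function.uncurry (blockAvgW n W) =
      avg ∘ fun p : ℝ × ℝ => (⌈(n : ℝ) * p.1⌉, ⌈(n : ℝ) * p.2⌉) := by
    funext p
    simp only [Function.uncurry, blockAvgW, blockIoc, Function.comp, avg]
  rw [hcomp]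
  exact havg.comp hceil

lemma abs_blockAvgG_le {f : ℝ → ℝ} {C : ℝ} (hC : 0 ≤ C) (hf : ∀ᵐ x, |f x| ≤ C) (n : ℕ) (x : ℝ) :
    |blockAvgG n f x| ≤ C := by
  rw [blockAvgG_eq_setAverage]
  exact abs_average_le hC (ae_restrict_of_ae hf)

lemma IsBoundedKernel.blockAvgW {K : ℝ} {W : ℝ → ℝ → ℝ} (hW : IsBoundedKernel K W) (n : ℕ) :
    IsBoundedKernel K (blockAvgW n W) where
  measurable := measurable_blockAvgW n W
  abs_le x y := by
    rw [blockAvgW_eq_setAverage]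
    exact abs_average_le hW.nonneg (.of_forall fun p => hW.abs_le p.1 p.2)

lemma ae_tendsto_blockAvgG {f : ℝ → ℝ} (hf : LocallyIntegrable f) :
    ∀ᵐ x, Tendsto (fun n => blockAvgG n f x) atTop (𝓝 (f x)) := by
  filter_upwards [IsUnifLocDoublingMeasure.ae_tendsto_average volume hf 1] with x hx
  simp only [blockAvgG_eq_setAverage]
  refine hx (blockCenter · x) _ tendsto_one_div_two_mul_natCast ?_
  filter_upwards [eventually_gt_atTop 0] with n hn
  simpa only [one_mul] using mem_closedBall_blockCenter hn x

lemma ae_tendsto_blockAvgW {W : ℝ → ℝ → ℝ} (hW : LocallyIntegrable (Function.uncurry W)) :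
    ∀ᵐ p : ℝ × ℝ, Tendsto (fun n => blockAvgW n W p.1 p.2) atTop (𝓝 (W p.1 p.2)) := by
  filter_upwards [IsUnifLocDoublingMeasure.ae_tendsto_average volume hW 1] with p hp
  simp only [blockAvgW_eq_setAverage]
  refine hp (fun n => (blockCenter n p.1, blockCenter n p.2)) _ tendsto_one_div_two_mul_natCast ?_
  filter_upwards [eventually_gt_atTop 0] with n hn
  rw [one_mul, ← closedBall_prod_same]
  exact ⟨mem_closedBall_blockCenter hn p.1, mem_closedBall_blockCenter hn p.2⟩

lemma blockAvgG_indicator_Icc {n : ℕ} (hn : 0 < n) (g : ℝ → ℝ) {x : ℝ} (hx : x ∈ Ioc (0 : ℝ) 1) :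
    blockAvgG n ((Icc 0 1).indicator g) x = blockAvgG n g x := by
  rw [blockAvgG, blockAvgG, setIntegral_indicator measurableSet_Icc,
    inter_eq_left.2 (blockIoc_subset_Icc hn hx)]

theorem tendsto_integral_abs_blockAvgG_sub {g : ℝ → ℝ} (hg : IsLinf g) :
    Tendsto (fun n => ∫ x, |blockAvgG n g x - g x| ∂mu01) atTop (𝓝 0) := by
  obtain ⟨hgm, M, hM⟩ := hg
  -- `g` may fail to be locally integrable outside `[0,1]`.
  let h := (Icc (0 : ℝ) 1).indicator g
  have hbound : ∀ᵐ x, |h x| ≤ |M| := by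
    filter_upwards [(ae_restrict_iff' measurableSet_Icc).1 hM] with x hx
    by_cases hx01 : x ∈ Icc (0 : ℝ) 1
    · simpa only [h, indicator_of_mem hx01] using (hx hx01).trans (le_abs_self M)
    · simp [h, hx01]
  have hgi : IntegrableOn g (Icc 0 1) := Integrable.of_bound hgm.aestronglyMeasurable M hM
  have hint : Integrable h := hgi.integrable_indicator measurableSet_Icc
  have hlim : Tendsto (fun n => ∫ x, |blockAvgG n h x - h x| ∂mu01) atTop (𝓝 0) :=
    tendsto_integral_abs_sub_of_ae_tendsto
      (fun n => (measurable_blockAvgG n h).aestronglyMeasurable)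
      (fun n => .of_forall (abs_blockAvgG_le (abs_nonneg M) hbound n))
      (ae_restrict_of_ae (ae_tendsto_blockAvgG hint.locallyIntegrable))
  have hmem : ∀ᵐ x ∂mu01, x ∈ Ioc (0 : ℝ) 1 := by
    rw [mu01, ← restrict_Ioc_eq_restrict_Icc]
    exact ae_restrict_mem measurableSet_Ioc
  refine hlim.congr' ?_
  filter_upwards [eventually_gt_atTop 0] with n hn
  refine integral_congr_ae ?_
  filter_upwards [hmem] with x hx
  simp only [h, blockAvgG_indicator_Icc hn g hx, indicator_of_mem (Ioc_subset_Icc_self hx)]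

theorem tendsto_integral_abs_blockAvgW_sub {K : ℝ} {W : ℝ → ℝ → ℝ} (hW : IsBoundedKernel K W) :
    Tendsto (fun n => ∫ p, |blockAvgW n W p.1 p.2 - W p.1 p.2| ∂mu01.prod mu01) atTop (𝓝 0) := by
  have hint : LocallyIntegrable (Function.uncurry W) :=
    (locallyIntegrable_const K).mono hW.measurable.aestronglyMeasurable
      (.of_forall fun p => (hW.abs_le p.1 p.2).trans (le_abs_self K))
  have hlim : ∀ᵐ p ∂mu01.prod mu01,
      Tendsto (fun n => blockAvgW n W p.1 p.2) atTop (𝓝 (W p.1 p.2)) := by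
    rw [mu01, Measure.prod_restrict]
    exact ae_restrict_of_ae (ae_tendsto_blockAvgW hint)
  exact tendsto_integral_abs_sub_of_ae_tendsto
    (fun n => (hW.blockAvgW n).measurable.aestronglyMeasurable)
    (fun n => .of_forall fun p => (hW.blockAvgW n).abs_le p.1 p.2) hlim

end BlockAverages

theorem IsSolution.eventually_integral_abs_blockAvg_sub_lt {K T δ : ℝ} {W : ℝ → ℝ → ℝ} {g : ℝ → ℝ}
    {u : ℝ → ℝ → ℝ} {un : ℕ → ℝ → ℝ → ℝ} (hW : IsBoundedKernel K W) (hg : IsLinf g)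
    (hu : IsSolution W g u) (hun : ∀ n, IsSolution (blockAvgW n W) (blockAvgG n g) (un n))
    (hT : 0 < T) (hδ : 0 < δ) :
    ∀ᶠ n in atTop, ∀ t ∈ Icc 0 T, ∫ x, |un n x t - u x t| ∂mu01 < δ := by
  obtain ⟨C, hC⟩ := hu.exists_integral_abs_sub_le hW hT
  have hlim : Tendsto (fun n => C * (∫ x, |blockAvgG n g x - g x| ∂mu01 +
      ∫ p, |blockAvgW n W p.1 p.2 - W p.1 p.2| ∂mu01.prod mu01)) atTop (𝓝 0) := by
    simpa using ((tendsto_integral_abs_blockAvgG_sub hg).add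
      (tendsto_integral_abs_blockAvgW_sub hW)).const_mul C
  filter_upwards [hlim.eventually_lt_const hδ] with n hn t ht
  exact (hC _ _ _ (hW.blockAvgW n) (hun n) t ht).trans_lt hn

lemma mul_measureReal_lt_abs_sub_le {α : Type*} [MeasurableSpace α] {μ : Measure α}
    [IsProbabilityMeasure μ] {v w : α → ℝ} {δ ε : ℝ} (hvw : Integrable (fun x => |v x - w x|) μ)
    (hw : ∀ᵐ p ∂μ.prod μ, |w p.1 - w p.2| ≤ δ) (hδ : δ ≤ ε) :
    (ε - δ) * (μ.prod μ).real {p | ε < |v p.1 - v p.2|} ≤ 2 * ∫ x, |v x - w x| ∂μ := by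
  set F : α × α → ℝ := fun p => |v p.1 - w p.1| + |v p.2 - w p.2|
  have hF : ∫ p, F p ∂μ.prod μ = 2 * ∫ x, |v x - w x| ∂μ := by
    rw [integral_add (hvw.comp_fst μ) (hvw.comp_snd μ), integral_fun_fst fun x => |v x - w x|,
      integral_fun_snd fun x => |v x - w x|]
    simp only [probReal_univ, one_smul, two_mul]
  have hsub : {p : α × α | ε < |v p.1 - v p.2|} ≤ᵐ[μ.prod μ] {p | ε - δ ≤ F p} := by
    filter_upwards [hw] with p hp (hv : ε < |v p.1 - v p.2|)
    have htri : |v p.1 - v p.2| ≤ F p + |w p.1 - w p.2| := by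
      calc |v p.1 - v p.2| = |(v p.1 - w p.1) - (v p.2 - w p.2) + (w p.1 - w p.2)| := by ring_nf
        _ ≤ |(v p.1 - w p.1) - (v p.2 - w p.2)| + |w p.1 - w p.2| := abs_add_le _ _
        _ ≤ F p + |w p.1 - w p.2| := by gcongr; exact abs_sub _ _
    change ε - δ ≤ F p
    linarith
  calc (ε - δ) * (μ.prod μ).real {p | ε < |v p.1 - v p.2|}
      ≤ (ε - δ) * (μ.prod μ).real {p | ε - δ ≤ F p} :=
        mul_le_mul_of_nonneg_left
          (ENNReal.toReal_mono (measure_ne_top _ _) (measure_mono_ae hsub)) (sub_nonneg.2 hδ)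
    _ ≤ ∫ p, F p ∂μ.prod μ :=
        mul_meas_ge_le_integral_of_nonneg
          (.of_forall fun p => add_nonneg (abs_nonneg _) (abs_nonneg _))
          ((hvw.comp_fst μ).add (hvw.comp_snd μ)) _
    _ = 2 * ∫ x, |v x - w x| ∂μ := hF

lemma exists_measurableSet_abs_sub_le {v : ℝ → ℝ} {ε η : ℝ} (hv : Measurable v)
    (hη : (mu01.prod mu01).real {p | ε < |v p.1 - v p.2|} < η) :
    ∃ S : Set (ℝ × ℝ), MeasurableSet S ∧ S ⊆ Icc 0 1 ×ˢ Icc 0 1 ∧ volume S < ENNReal.ofReal η ∧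
      ∀ x y : ℝ, (x, y) ∈ (Icc 0 1 ×ˢ Icc 0 1) \ S → |v x - v y| ≤ ε := by
  have hS : MeasurableSet {p : ℝ × ℝ | ε < |v p.1 - v p.2|} :=
    measurableSet_lt measurable_const (by fun_prop)
  refine ⟨{p | ε < |v p.1 - v p.2|} ∩ Icc 0 1 ×ˢ Icc 0 1,
    hS.inter (measurableSet_Icc.prod measurableSet_Icc), inter_subset_right, ?_, ?_⟩
  · rw [← Measure.restrict_apply hS, Measure.volume_eq_prod, ← Measure.prod_restrict]
    exact (ENNReal.lt_ofReal_iff_toReal_lt (measure_ne_top (mu01.prod mu01) _)).2 hη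
  · rintro x y ⟨hxy, hxyS⟩
    exact not_lt.1 fun hlt => hxyS ⟨hlt, hxy⟩

theorem consensus_approximation_general {K : ℝ}
    {W : ℝ → ℝ → ℝ} {g : ℝ → ℝ} (hW : IsBoundedKernel K W) (hg : IsLinf g)
    {u : ℝ → ℝ → ℝ} (hu : IsSolution W g u) {un : ℕ → ℝ → ℝ → ℝ}
    (hun : ∀ n : ℕ, IsSolution (blockAvgW n W) (blockAvgG n g) (un n))
    (hcons : ReachesConsensusOn u (Icc 0 1)) :
    ∀ ε > (0 : ℝ), ∀ c > (0 : ℝ), ∀ D > (0 : ℝ),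
      ∃ T > (0 : ℝ), ∃ N : ℕ, ∀ n > N, ∀ t ∈ Icc T (T + D),
        ∃ S : Set (ℝ × ℝ), MeasurableSet S ∧ S ⊆ Icc 0 1 ×ˢ Icc 0 1 ∧
          volume S < ENNReal.ofReal (c ^ 2) ∧
          ∀ x y : ℝ, (x, y) ∈ (Icc 0 1 ×ˢ Icc 0 1) \ S → |un n x t - un n y t| ≤ ε := by
  intro ε hε c hc D hD
  obtain ⟨T₀, hT₀⟩ := hcons (ε / 2) (by positivity)
  have hT : 0 < max T₀ 1 := lt_max_of_lt_right one_pos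
  obtain ⟨N, hN⟩ := eventually_atTop.1 <|
    hu.eventually_integral_abs_blockAvg_sub_lt hW hg hun (T := max T₀ 1 + D)
      (δ := ε * c ^ 2 / 4) (by positivity) (by positivity)
  refine ⟨max T₀ 1, hT, N, fun n hn t ht => ?_⟩
  have ht₀ : 0 ≤ t := hT.le.trans ht.1
  have hclose := hN n hn.le t ⟨ht₀, ht.2⟩
  have hmarkov : (ε - ε / 2) * (mu01.prod mu01).real {p | ε < |un n p.1 t - un n p.2 t|} ≤
      2 * ∫ x, |un n x t - u x t| ∂mu01 :=
    mul_measureReal_lt_abs_sub_le (((hun n).integrable_at ht₀).sub (hu.integrable_at ht₀)).abs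
      (hT₀ t ((le_max_left _ _).trans ht.1)) (by linarith)
  refine exists_measurableSet_abs_sub_le (hun n).1.of_uncurry_right (lt_of_mul_lt_mul_left ?_ hε.le)
  linarith

/-- Key theorem: if the continuum solution reaches consensus, then solutions on the
block approximations are eventually close to consensus off a set of small measure. -/
theorem consensus_approximation
    (W : ℝ → ℝ → ℝ) (g : ℝ → ℝ) (hW : IsKernel W) (hg : IsLinf g)
    (u : ℝ → ℝ → ℝ) (hu : IsSolution W g u)
    (un : ℕ → ℝ → ℝ → ℝ)
    (hun : ∀ n : ℕ, IsSolution (blockAvgW n W) (blockAvgG n g) (un n))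
    (hcons : ReachesConsensusOn u (Set.Icc (0:ℝ) 1)) :
    ∀ ε > (0:ℝ), ∀ c > (0:ℝ), ∀ D > (0:ℝ),
      ∃ T > (0:ℝ), ∃ N : ℕ, ∀ n > N, ∀ t ∈ Set.Icc T (T + D),
        ∃ S : Set (ℝ × ℝ), MeasurableSet S ∧
          S ⊆ (Set.Icc (0:ℝ) 1) ×ˢ (Set.Icc (0:ℝ) 1) ∧
          volume S < ENNReal.ofReal (c ^ 2) ∧
          ∀ x y : ℝ, (x, y) ∈ ((Set.Icc (0:ℝ) 1) ×ˢ (Set.Icc (0:ℝ) 1)) \ S →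
            |un n x t - un n y t| ≤ ε := by
  exact consensus_approximation_general ⟨hW.1, fun x y => abs_le.2 (hW.2.2 x y)⟩ hg hu hun hcons

end
end

section
/- Let W be a kernel, g ∈ L∞([0,1]), and let u be the solution of the continuum voting model IVP for (W, g). If u reaches consensus on [0,1], then u is a bounded solution, i.e. sup_{t≥0} ess sup_{x∈[0,1]} |u(x,t)| < ∞. -/
open MeasureTheory Filter Set

noncomputable section

/-!
By symmetry of `W` the influence of `y` on `x` cancels that of `x` on `y`, so the mean opinion
`∫ u(x, t) dx` does not depend on `t`. Once all opinions lie within `C` of each other, they lie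
within `C` of this fixed mean, while up to any finite time a solution is bounded by definition.
-/

section VotingModel

variable {α β E : Type*} [MeasurableSpace α] [MeasurableSpace β]
  [NormedAddCommGroup E] [NormedSpace ℝ E]
  {μ : Measure α} {W : α → α → ℝ} {K : ℝ}

theorem integral_integral_eq_zero_of_antisymm [SFinite μ] {F : α → α → E}
    (hF : Integrable (Function.uncurry F) (μ.prod μ)) (hanti : ∀ x y, F x y = -F y x) :
    ∫ x, ∫ y, F x y ∂μ ∂μ = 0 := by
  have : IsAddTorsionFree E := .of_isTorsionFree ℝ E
  refine self_eq_neg.1 ?_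
  calc ∫ x, ∫ y, F x y ∂μ ∂μ
      = ∫ y, ∫ x, F x y ∂μ ∂μ := integral_integral_swap hF
    _ = ∫ y, ∫ x, -F y x ∂μ ∂μ := by simp_rw [← hanti]
    _ = -∫ x, ∫ y, F x y ∂μ ∂μ := by simp_rw [integral_neg]

theorem ae_norm_sub_average_le [CompleteSpace E] [IsFiniteMeasure μ] {f : α → E} {C : ℝ}
    (hf : Integrable f μ) (hC : ∀ᵐ p ∂μ.prod μ, ‖f p.1 - f p.2‖ ≤ C) :
    ∀ᵐ x ∂μ, ‖f x - ⨍ y, f y ∂μ‖ ≤ C := by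
  rcases eq_zero_or_neZero μ with rfl | _
  · simp
  · filter_upwards [Measure.ae_ae_of_ae_prod hC] with x hx
    simp_rw [← mem_closedBall_iff_norm'] at hx ⊢
    exact (convex_closedBall (f x) C).average_mem Metric.isClosed_closedBall hx hf

/-- The negative of the Laplacian of the weighted graph `W` on `(α, μ)`, applied to the opinion
profile `v`; it is the right-hand side of the voting model. -/
def votingField (μ : Measure α) (W : α → α → ℝ) (v : α → E) (x : α) : E :=
  ∫ y, W x y • (v y - v x) ∂μ

theorem integral_votingField_eq_zero [IsFiniteMeasure μ] {v : α → E}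
    (hWm : Measurable (Function.uncurry W)) (hsymm : ∀ x y, W x y = W y x)
    (hK : ∀ x y, |W x y| ≤ K) (hv : Integrable v μ) :
    ∫ x, votingField μ W v x ∂μ = 0 := by
  refine integral_integral_eq_zero_of_antisymm ?_ fun x y => ?_
  · exact ((hv.comp_snd μ).sub (hv.comp_fst μ)).bdd_smul K hWm.aestronglyMeasurable
      (Eventually.of_forall fun p => hK p.1 p.2)
  · rw [hsymm x y, ← smul_neg, neg_sub]

theorem ae_norm_votingField_le [IsFiniteMeasure μ] {v : α → E} {M : ℝ}
    (hK : ∀ x y, |W x y| ≤ K) (hv : ∀ᵐ x ∂μ, ‖v x‖ ≤ M) :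
    ∀ᵐ x ∂μ, ‖votingField μ W v x‖ ≤ K * (M + M) * μ.real univ := by
  filter_upwards [hv] with x hx
  refine norm_integral_le_of_norm_le_const ?_
  filter_upwards [hv] with y hy
  calc ‖W x y • (v y - v x)‖ = |W x y| * ‖v y - v x‖ := norm_smul _ _
    _ ≤ K * (M + M) :=
      mul_le_mul (hK x y) (norm_sub_le_of_le hy hx) (norm_nonneg _)
        ((abs_nonneg _).trans (hK x y))

theorem stronglyMeasurable_votingField [SFinite μ] {u : α → β → E}
    (hWm : Measurable (Function.uncurry W)) (hu : StronglyMeasurable (Function.uncurry u)) :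
    StronglyMeasurable fun p : β × α => votingField μ W (u · p.1) p.2 := by
  have hW : StronglyMeasurable fun q : (β × α) × α => W q.1.2 q.2 :=
    hWm.stronglyMeasurable.comp_measurable
      (g := fun q : (β × α) × α => (q.1.2, q.2)) (by fun_prop)
  have hu_snd : StronglyMeasurable fun q : (β × α) × α => u q.2 q.1.1 :=
    hu.comp_measurable (g := fun q : (β × α) × α => (q.2, q.1.1)) (by fun_prop)
  have hu_fst : StronglyMeasurable fun q : (β × α) × α => u q.1.2 q.1.1 :=
    hu.comp_measurable (g := fun q : (β × α) × α => (q.1.2, q.1.1)) (by fun_prop)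
  exact (hW.smul (hu_snd.sub hu_fst)).integral_prod_right'

theorem integrable_votingField_prod [IsFiniteMeasure μ] {ν : Measure β} [IsFiniteMeasure ν]
    {u : α → β → E} {M : ℝ} (hWm : Measurable (Function.uncurry W)) (hK : ∀ x y, |W x y| ≤ K)
    (hu : StronglyMeasurable (Function.uncurry u)) (hM : ∀ᵐ s ∂ν, ∀ᵐ x ∂μ, ‖u x s‖ ≤ M) :
    Integrable (Function.uncurry fun s => votingField μ W (u · s)) (ν.prod μ) := by
  have hmeas := stronglyMeasurable_votingField (μ := μ) hWm hu
  refine .of_bound hmeas.aestronglyMeasurable (K * (M + M) * μ.real univ) ?_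
  refine (Measure.ae_prod_iff_ae_ae (measurableSet_le hmeas.norm.measurable measurable_const)).2 ?_
  filter_upwards [hM] with s hs using ae_norm_votingField_le hK hs

/-- Solutions of the voting model on a measure space `(α, μ)` with opinions in a normed space `E`,
in integral form; `IsSolution` is the case of `[0,1]` and real opinions. -/
structure IsVotingSolution (μ : Measure α) (W : α → α → ℝ) (g : α → E) (u : α → ℝ → E) :
    Prop where
  stronglyMeasurable : StronglyMeasurable (Function.uncurry u)
  locally_bounded : ∀ T > 0, ∃ M : ℝ, ∀ t ∈ Icc 0 T, ∀ᵐ x ∂μ, ‖u x t‖ ≤ M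
  ae_eq_add_integral : ∀ t ≥ 0, ∀ᵐ x ∂μ,
    u x t = g x + ∫ s in Icc 0 t, votingField μ W (u · s) x

namespace IsVotingSolution

variable {g : α → E} {u : α → ℝ → E} {t : ℝ}

theorem exists_bound_Icc (hu : IsVotingSolution μ W g u) (T : ℝ) :
    ∃ M : ℝ, ∀ t ∈ Icc 0 T, ∀ᵐ x ∂μ, ‖u x t‖ ≤ M := by
  obtain ⟨M, hM⟩ := hu.locally_bounded (max T 1) (by positivity)
  exact ⟨M, fun t ht => hM t ⟨ht.1, ht.2.trans (le_max_left T 1)⟩⟩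

theorem integrable [IsFiniteMeasure μ] (hu : IsVotingSolution μ W g u) (ht : 0 ≤ t) :
    Integrable (u · t) μ := by
  obtain ⟨M, hM⟩ := hu.exists_bound_Icc t
  exact .of_bound (hu.stronglyMeasurable.comp_measurable
    measurable_prodMk_right).aestronglyMeasurable M (hM t ⟨ht, le_rfl⟩)

theorem initial_ae_eq (hu : IsVotingSolution μ W g u) : (u · 0) =ᵐ[μ] g := by
  filter_upwards [hu.ae_eq_add_integral 0 le_rfl] with x hx
  simpa using hx

theorem integral_eq_integral_initial [IsFiniteMeasure μ] (hu : IsVotingSolution μ W g u)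
    (hWm : Measurable (Function.uncurry W)) (hsymm : ∀ x y, W x y = W y x)
    (hK : ∀ x y, |W x y| ≤ K) (ht : 0 ≤ t) :
    ∫ x, u x t ∂μ = ∫ x, g x ∂μ := by
  obtain ⟨M, hM⟩ := hu.exists_bound_Icc t
  have hg : Integrable g μ := (hu.integrable le_rfl).congr hu.initial_ae_eq
  have hfield : Integrable (Function.uncurry fun s => votingField μ W (u · s))
      ((volume.restrict (Icc 0 t)).prod μ) :=
    integrable_votingField_prod hWm hK hu.stronglyMeasurable
      (ae_restrict_of_forall_mem measurableSet_Icc hM)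
  have hzero : ∀ s ∈ Icc 0 t, ∫ x, votingField μ W (u · s) x ∂μ = 0 := fun s hs =>
    integral_votingField_eq_zero hWm hsymm hK (hu.integrable hs.1)
  calc ∫ x, u x t ∂μ
      = ∫ x, (g x + ∫ s in Icc 0 t, votingField μ W (u · s) x) ∂μ :=
        integral_congr_ae (hu.ae_eq_add_integral t ht)
    _ = ∫ x, g x ∂μ + ∫ x, (∫ s in Icc 0 t, votingField μ W (u · s) x) ∂μ :=
        integral_add hg hfield.integral_prod_right
    _ = ∫ x, g x ∂μ + ∫ s in Icc 0 t, ∫ x, votingField μ W (u · s) x ∂μ := by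
        rw [integral_integral_swap hfield]
    _ = ∫ x, g x ∂μ := by
        rw [setIntegral_eq_zero_of_forall_eq_zero hzero, add_zero]

theorem ae_norm_le_of_spread_le [CompleteSpace E] [IsFiniteMeasure μ] {C : ℝ}
    (hu : IsVotingSolution μ W g u) (hWm : Measurable (Function.uncurry W))
    (hsymm : ∀ x y, W x y = W y x) (hK : ∀ x y, |W x y| ≤ K) (ht : 0 ≤ t)
    (hC : ∀ᵐ p ∂μ.prod μ, ‖u p.1 t - u p.2 t‖ ≤ C) :
    ∀ᵐ x ∂μ, ‖u x t‖ ≤ ‖⨍ y, g y ∂μ‖ + C := by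
  have hmean : ⨍ y, u y t ∂μ = ⨍ y, g y ∂μ := by
    rw [average_eq, average_eq, hu.integral_eq_integral_initial hWm hsymm hK ht]
  filter_upwards [ae_norm_sub_average_le (hu.integrable ht) hC] with x hx
  rw [hmean] at hx
  exact norm_le_norm_add_const_of_dist_le (by rwa [dist_eq_norm])

end IsVotingSolution

theorem consensus_implies_bounded_general [CompleteSpace E] [IsFiniteMeasure μ]
    {g : α → E} {u : α → ℝ → E} {C : ℝ}
    (hWm : Measurable (Function.uncurry W)) (hsymm : ∀ x y, W x y = W y x)
    (hK : ∀ x y, |W x y| ≤ K) (hu : IsVotingSolution μ W g u)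
    (hspread : ∀ᶠ t in atTop, ∀ᵐ p ∂μ.prod μ, ‖u p.1 t - u p.2 t‖ ≤ C) :
    ∃ M : ℝ, ∀ t ≥ 0, ∀ᵐ x ∂μ, ‖u x t‖ ≤ M := by
  obtain ⟨T, hT⟩ := eventually_atTop.1 hspread
  obtain ⟨M, hM⟩ := hu.exists_bound_Icc T
  refine ⟨max M (‖⨍ y, g y ∂μ‖ + C), fun t ht => ?_⟩
  rcases le_total t T with htT | hTt
  · filter_upwards [hM t ⟨ht, htT⟩] with x hx using le_max_of_le_left hx
  · filter_upwards [hu.ae_norm_le_of_spread_le hWm hsymm hK ht (hT t hTt)] with x hx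
      using le_max_of_le_right hx

end VotingModel

instance isFiniteMeasure_mu01 : IsFiniteMeasure mu01 :=
  inferInstanceAs (IsFiniteMeasure (volume.restrict (Icc (0 : ℝ) 1)))

theorem IsSolution.isVotingSolution {W : ℝ → ℝ → ℝ} {g : ℝ → ℝ} {u : ℝ → ℝ → ℝ}
    (hu : IsSolution W g u) : IsVotingSolution mu01 W g u :=
  ⟨hu.1.stronglyMeasurable, hu.2.1, hu.2.2⟩

/-- If the solution reaches consensus then it is a bounded solution. -/
theorem consensus_implies_bounded (W : ℝ → ℝ → ℝ) (g : ℝ → ℝ) (u : ℝ → ℝ → ℝ)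
    (hW : IsKernel W) (hg : IsLinf g) (hu : IsSolution W g u)
    (hcons : ReachesConsensusOn u (Set.Icc (0:ℝ) 1)) :
    BoundedSolution u :=
  consensus_implies_bounded_general hW.1 hW.2.1 (fun x y => abs_le.2 (hW.2.2 x y))
    hu.isVotingSolution (eventually_atTop.2 (hcons 1 one_pos))

end
end

section
/- Let W be a graphon, let p ∈ (0, 1/2), and define the graphon W_p(x,y) = (1−p) W(x,y) + p (1 − W(x,y)). Let g ∈ L∞([0,1]) with ∫₀¹ g(y) dy = 0, and let v be the solution of the continuum voting model IVP for the kernel (1−2p)·W with initial condition g. Then the function u defined by u(x,t) = e^{−pt} v(x,t) is the solution of the continuum voting model IVP for (W_p, g); consequently, if v reaches consensus on [0,1] then u reaches consensus on [0,1]. -/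
open MeasureTheory Filter Set

noncomputable section

/-!
Since `(1 - p) W + p (1 - W) = (1 - 2p) W + p`, passing from `(1 - 2p) W` to `W_p` adds the constant
`p` to the kernel. On a probability space this changes the right-hand side of the model by
`p (∫ v - v x)`. Symmetry of the kernel conserves the mean of `v`, which is initially zero, so the
change is just `-p v x`, the term that multiplication by `e^{-pt}` produces by the product rule. As
solutions satisfy an integral equation only, the product rule is the one for absolutely continuous
functions.
-/

section ProductRule

theorem mul_add_intervalIntegral_eq {φ f : ℝ → ℝ} {a b : ℝ} (c : ℝ)
    (hφ : AbsolutelyContinuousOnInterval φ a b) (hf : IntervalIntegrable f volume a b) :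
    φ b * (c + ∫ s in a..b, f s) =
      φ a * c + ∫ s in a..b, (deriv φ s * (c + ∫ r in a..s, f r) + φ s * f s) := by
  have hF : AbsolutelyContinuousOnInterval (fun s => c + ∫ r in a..s, f r) a b :=
    (LipschitzWith.const c).lipschitzOnWith.absolutelyContinuousOnInterval.add
      (hf.absolutelyContinuousOnInterval_intervalIntegral left_mem_uIcc)
  have hF_deriv : ∀ᵐ s, s ∈ uIoc a b → deriv (fun s => c + ∫ r in a..s, f r) s = f s := by
    filter_upwards [hf.ae_hasDerivAt_integral] with s hs hsab
    exact ((hs (uIoc_subset_uIcc hsab) a left_mem_uIcc).const_add c).deriv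
  have product_rule := hφ.integral_deriv_mul_eq_sub hF
  rw [intervalIntegral.integral_same, add_zero] at product_rule
  rw [← sub_eq_iff_eq_add', ← product_rule]
  refine intervalIntegral.integral_congr_ae ?_
  filter_upwards [hF_deriv] with s hs hsab
  rw [hs hsab]

theorem exp_neg_mul_mul_eq_add_setIntegral {f h : ℝ → ℝ} {c t : ℝ} (p : ℝ) (ht : 0 ≤ t)
    (hf : IntegrableOn f (Icc 0 t))
    (h_ae : ∀ᵐ s ∂volume.restrict (Icc 0 t), h s = c + ∫ r in Icc 0 s, f r)
    (h_right : h t = c + ∫ r in Icc 0 t, f r) :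
    Real.exp (-p * t) * h t =
      c + ∫ s in Icc 0 t, Real.exp (-p * s) * (f s - p * h s) := by
  have hasDerivAt_exp (s : ℝ) :
      HasDerivAt (fun s => Real.exp (-p * s)) (Real.exp (-p * s) * (-p)) s :=
    (hasDerivAt_const_mul (-p)).exp
  have h_exp : ContDiff ℝ 1 fun s => Real.exp (-p * s) := by fun_prop
  have product_rule := mul_add_intervalIntegral_eq c
    h_exp.contDiffOn.absolutelyContinuousOnInterval
    ((intervalIntegrable_iff_integrableOn_Icc_of_le ht).2 hf)
  rw [intervalIntegral.integral_of_le ht, ← integral_Icc_eq_integral_Ioc, ← h_right,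
    mul_zero, Real.exp_zero, one_mul, intervalIntegral.integral_of_le ht,
    ← integral_Icc_eq_integral_Ioc] at product_rule
  rw [product_rule]
  congr 1
  refine integral_congr_ae ?_
  filter_upwards [h_ae, ae_restrict_mem measurableSet_Icc] with s hs hst
  rw [(hasDerivAt_exp s).deriv, intervalIntegral.integral_of_le hst.1,
    ← integral_Icc_eq_integral_Ioc, ← hs]
  ring

end ProductRule

theorem measurable_setIntegral_Icc {α : Type*} [MeasurableSpace α] {F : α → ℝ → ℝ}
    (hF : Measurable (Function.uncurry F)) (a : ℝ) :
    Measurable fun q : α × ℝ => ∫ r in Icc a q.2, F q.1 r := by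
  have h_indicator : Measurable
      ({q : (α × ℝ) × ℝ | a ≤ q.2 ∧ q.2 ≤ q.1.2}.indicator fun q => F q.1.1 q.2) :=
    (hF.comp (measurable_fst.fst.prodMk measurable_snd)).indicator
      ((measurableSet_le measurable_const measurable_snd).inter
        (measurableSet_le measurable_snd measurable_fst.snd))
  convert (h_indicator.stronglyMeasurable.integral_prod_right' (ν := volume)).measurable
    using 2 with q
  exact (integral_indicator measurableSet_Icc).symm

/-- The Laplacian `f ↦ ∫ K(·, y) (f y - f ·) dμ(y)` of a kernel `K`. The voting model for `K` is the
evolution equation `∂ₜu = kernelLaplacian mu01 K u`. -/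
def kernelLaplacian {α : Type*} [MeasurableSpace α] (μ : Measure α) (K : α → α → ℝ)
    (f : α → ℝ) (x : α) : ℝ :=
  ∫ y, K x y * (f y - f x) ∂μ

section KernelLaplacian

variable {α β : Type*} [MeasurableSpace α] [MeasurableSpace β] {μ : Measure α}
  {K : α → α → ℝ} {f : α → ℝ} {C M : ℝ}

theorem kernelLaplacian_const_mul (c : ℝ) (x : α) :
    kernelLaplacian μ K (fun y => c * f y) x = c * kernelLaplacian μ K f x := by
  simp only [kernelLaplacian, ← integral_const_mul]
  congr 1 with y
  ring

theorem kernelLaplacian_add_const [IsProbabilityMeasure μ] {x : α} (hK : Measurable (K x))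
    (hKC : ∀ y, |K x y| ≤ C) (hf : Integrable f μ) (p : ℝ) :
    kernelLaplacian μ (fun x y => K x y + p) f x =
      kernelLaplacian μ K f x + p * (∫ y, f y ∂μ - f x) := by
  have h_diff : Integrable (fun y => f y - f x) μ := hf.sub (integrable_const _)
  have h_prod : Integrable (fun y => K x y * (f y - f x)) μ :=
    h_diff.bdd_mul hK.aestronglyMeasurable (ae_of_all _ hKC)
  simp only [kernelLaplacian, add_mul]
  rw [integral_add h_prod (h_diff.const_mul p), integral_const_mul,
    integral_sub hf (integrable_const _), integral_const, probReal_univ, one_smul]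

theorem abs_kernelLaplacian_le [IsFiniteMeasure μ] (hKC : ∀ x y, |K x y| ≤ C)
    (hfM : ∀ᵐ x ∂μ, |f x| ≤ M) :
    ∀ᵐ x ∂μ, |kernelLaplacian μ K f x| ≤ C * (M + M) * μ.real univ := by
  filter_upwards [hfM] with x hx
  have h_integrand : ∀ᵐ y ∂μ, ‖K x y * (f y - f x)‖ ≤ C * (M + M) := by
    filter_upwards [hfM] with y hy
    calc ‖K x y * (f y - f x)‖ = |K x y| * |f y - f x| := abs_mul _ _
      _ ≤ C * (M + M) :=
        mul_le_mul (hKC x y) ((abs_sub _ _).trans (add_le_add hy hx)) (abs_nonneg _)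
          ((abs_nonneg _).trans (hKC x y))
  exact norm_integral_le_of_norm_le_const h_integrand

theorem measurable_kernelLaplacian [SFinite μ] {u : α → β → ℝ}
    (hK : Measurable (Function.uncurry K)) (hu : Measurable (Function.uncurry u)) :
    Measurable (Function.uncurry fun x s => kernelLaplacian μ K (u · s) x) := by
  have h_integrand : Measurable fun q : (α × β) × α =>
      K q.1.1 q.2 * (u q.2 q.1.2 - u q.1.1 q.1.2) :=
    (hK.comp (measurable_fst.fst.prodMk measurable_snd)).mul
      ((hu.comp (measurable_snd.prodMk measurable_fst.snd)).sub (hu.comp measurable_fst))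
  exact h_integrand.stronglyMeasurable.integral_prod_right'.measurable

theorem integrable_prod_kernelLaplacian [IsFiniteMeasure μ] {ν : Measure β} [IsFiniteMeasure ν]
    {u : α → β → ℝ} (hK : Measurable (Function.uncurry K)) (hKC : ∀ x y, |K x y| ≤ C)
    (hu : Measurable (Function.uncurry u)) (huM : ∀ᵐ s ∂ν, ∀ᵐ x ∂μ, |u x s| ≤ M) :
    Integrable (Function.uncurry fun x s => kernelLaplacian μ K (u · s) x) (μ.prod ν) := by
  have h_meas := measurable_kernelLaplacian (μ := μ) hK hu
  refine .of_bound h_meas.aestronglyMeasurable (C * (M + M) * μ.real univ) ?_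
  have h_set := measurableSet_le h_meas.norm (measurable_const (a := C * (M + M) * μ.real univ))
  rw [Measure.ae_prod_iff_ae_ae h_set, Measure.ae_ae_comm h_set]
  filter_upwards [huM] with s hs
  exact abs_kernelLaplacian_le hKC hs

theorem integral_kernelLaplacian_eq_zero [IsFiniteMeasure μ] (hK : Measurable (Function.uncurry K))
    (hK_symm : ∀ x y, K x y = K y x) (hKC : ∀ x y, |K x y| ≤ C) (hf : Integrable f μ) :
    ∫ x, kernelLaplacian μ K f x ∂μ = 0 := by
  have h_int : Integrable (Function.uncurry fun x y => K x y * (f y - f x)) (μ.prod μ) :=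
    ((hf.comp_snd μ).sub (hf.comp_fst μ)).bdd_mul hK.aestronglyMeasurable
      (ae_of_all _ fun q => hKC q.1 q.2)
  have h_antisymm : ∫ x, kernelLaplacian μ K f x ∂μ = -∫ x, kernelLaplacian μ K f x ∂μ :=
    calc ∫ x, kernelLaplacian μ K f x ∂μ
        = ∫ y, ∫ x, K x y * (f y - f x) ∂μ ∂μ := integral_integral_swap h_int
      _ = ∫ y, -kernelLaplacian μ K f y ∂μ := by
        congr 1 with y
        rw [kernelLaplacian, ← integral_neg]
        congr 1 with x
        rw [hK_symm]
        ring
      _ = -∫ x, kernelLaplacian μ K f x ∂μ := integral_neg _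
  exact self_eq_neg.1 h_antisymm

end KernelLaplacian

instance : IsProbabilityMeasure mu01 :=
  ⟨by rw [mu01, Measure.restrict_apply_univ, Real.volume_Icc, sub_zero, ENNReal.ofReal_one]⟩

namespace IsSolution

variable {K : ℝ → ℝ → ℝ} {g : ℝ → ℝ} {u : ℝ → ℝ → ℝ} {C t : ℝ}

theorem ae_eq_add_setIntegral_kernelLaplacian (hu : IsSolution K g u) (ht : 0 ≤ t) :
    ∀ᵐ x ∂mu01, u x t = g x + ∫ s in Icc 0 t, kernelLaplacian mu01 K (u · s) x :=
  hu.2.2 t ht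

theorem ae_eq_initial (hu : IsSolution K g u) : (u · 0) =ᵐ[mu01] g := by
  filter_upwards [hu.ae_eq_add_setIntegral_kernelLaplacian le_rfl] with x hx
  simpa only [Icc_self, Measure.restrict_singleton, Real.volume_singleton, zero_smul,
    integral_zero_measure, add_zero] using hx

theorem exists_bound (hu : IsSolution K g u) (t : ℝ) :
    ∃ M : ℝ, ∀ s ∈ Icc 0 t, ∀ᵐ x ∂mu01, |u x s| ≤ M := by
  obtain ⟨M, hM⟩ := hu.2.1 (max t 1) (by positivity)
  exact ⟨M, fun s hs => hM s ⟨hs.1, hs.2.trans (le_max_left _ _)⟩⟩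

theorem integrable (hu : IsSolution K g u) (ht : 0 ≤ t) : Integrable (u · t) mu01 := by
  obtain ⟨M, hM⟩ := hu.exists_bound t
  exact .of_bound hu.1.of_uncurry_right.aestronglyMeasurable M (hM t (right_mem_Icc.2 ht))

theorem integrable_prod_kernelLaplacian (hu : IsSolution K g u)
    (hK : Measurable (Function.uncurry K)) (hKC : ∀ x y, |K x y| ≤ C) (t : ℝ) :
    Integrable (Function.uncurry fun x s => kernelLaplacian mu01 K (u · s) x)
      (mu01.prod (volume.restrict (Icc 0 t))) := by
  obtain ⟨M, hM⟩ := hu.exists_bound t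
  exact _root_.integrable_prod_kernelLaplacian hK hKC hu.1
    (ae_restrict_of_forall_mem measurableSet_Icc hM)

theorem integral_eq_integral_initial (hu : IsSolution K g u)
    (hK : Measurable (Function.uncurry K)) (hK_symm : ∀ x y, K x y = K y x)
    (hKC : ∀ x y, |K x y| ≤ C) (ht : 0 ≤ t) : ∫ x, u x t ∂mu01 = ∫ x, g x ∂mu01 := by
  have hg : Integrable g mu01 := (hu.integrable le_rfl).congr hu.ae_eq_initial
  have h_int := hu.integrable_prod_kernelLaplacian hK hKC t
  have h_increment_int :
      Integrable (fun x => ∫ s in Icc 0 t, kernelLaplacian mu01 K (u · s) x) mu01 :=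
    h_int.integral_prod_left
  have h_increment :
      ∫ x, (∫ s in Icc 0 t, kernelLaplacian mu01 K (u · s) x) ∂mu01 = 0 := by
    rw [integral_integral_swap h_int]
    exact setIntegral_eq_zero_of_forall_eq_zero fun s hs =>
      integral_kernelLaplacian_eq_zero hK hK_symm hKC (hu.integrable hs.1)
  rw [integral_congr_ae (hu.ae_eq_add_setIntegral_kernelLaplacian ht),
    integral_add hg h_increment_int, h_increment, add_zero]

theorem ae_ae_eq_add_setIntegral_kernelLaplacian (hu : IsSolution K g u)
    (hK : Measurable (Function.uncurry K)) (t : ℝ) :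
    ∀ᵐ x ∂mu01, ∀ᵐ s ∂volume.restrict (Icc 0 t),
      u x s = g x + ∫ r in Icc 0 s, kernelLaplacian mu01 K (u · r) x := by
  -- Exchanging the quantifiers takes a measurable set, hence `u · 0` in place of `g`.
  have h_set : MeasurableSet {q : ℝ × ℝ |
      u q.1 q.2 = u q.1 0 + ∫ r in Icc 0 q.2, kernelLaplacian mu01 K (u · r) q.1} :=
    measurableSet_eq_fun hu.1 ((hu.1.of_uncurry_right.comp measurable_fst).add
      (measurable_setIntegral_Icc (measurable_kernelLaplacian hK hu.1) 0))
  have h_initial : ∀ᵐ x ∂mu01, ∀ᵐ s ∂volume.restrict (Icc 0 t),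
      u x s = u x 0 + ∫ r in Icc 0 s, kernelLaplacian mu01 K (u · r) x := by
    rw [Measure.ae_ae_comm h_set]
    refine ae_restrict_of_forall_mem measurableSet_Icc fun s hs => ?_
    filter_upwards [hu.ae_eq_add_setIntegral_kernelLaplacian hs.1, hu.ae_eq_initial]
      with x hxs hx0
    rw [hxs, hx0]
  filter_upwards [h_initial, hu.ae_eq_initial] with x hx hx0
  rwa [← hx0]

theorem exists_bound_exp_neg_mul (hu : IsSolution K g u) (p T : ℝ) :
    ∃ M : ℝ, ∀ t ∈ Icc 0 T, ∀ᵐ x ∂mu01, |Real.exp (-p * t) * u x t| ≤ M := by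
  obtain ⟨M, hM⟩ := hu.exists_bound T
  refine ⟨Real.exp (|p| * T) * M, fun t ht => ?_⟩
  filter_upwards [hM t ht] with x hx
  have h_exp : Real.exp (-p * t) ≤ Real.exp (|p| * T) :=
    Real.exp_le_exp.2 (mul_le_mul (neg_le_abs p) ht.2 ht.1 (abs_nonneg p))
  rw [abs_mul, Real.abs_exp]
  exact mul_le_mul h_exp hx (abs_nonneg _) (Real.exp_nonneg _)

theorem exp_neg_mul (hu : IsSolution K g u) (hK : Measurable (Function.uncurry K))
    (hK_symm : ∀ x y, K x y = K y x) (hKC : ∀ x y, |K x y| ≤ C)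
    (hg : ∫ x, g x ∂mu01 = 0) (p : ℝ) :
    IsSolution (fun x y => K x y + p) g (fun x t => Real.exp (-p * t) * u x t) := by
  have h_meas : Measurable (Function.uncurry fun x t => Real.exp (-p * t) * u x t) :=
    (measurable_snd.const_mul (-p)).exp.mul hu.1
  refine ⟨h_meas, fun T _ => hu.exists_bound_exp_neg_mul p T, fun t ht => ?_⟩
  have h_laplacian (x s : ℝ) (hs : 0 ≤ s) :
      kernelLaplacian mu01 (fun x y => K x y + p) (fun y => Real.exp (-p * s) * u y s) x =
        Real.exp (-p * s) * (kernelLaplacian mu01 K (u · s) x - p * u x s) := by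
    rw [kernelLaplacian_const_mul,
      kernelLaplacian_add_const hK.of_uncurry_left (hKC x) (hu.integrable hs),
      hu.integral_eq_integral_initial hK hK_symm hKC hs, hg]
    ring
  filter_upwards [hu.ae_ae_eq_add_setIntegral_kernelLaplacian hK t,
    hu.ae_eq_add_setIntegral_kernelLaplacian ht,
    (hu.integrable_prod_kernelLaplacian hK hKC t).prod_right_ae] with x hx hxt hx_int
  rw [exp_neg_mul_mul_eq_add_setIntegral p ht hx_int hx hxt]
  congr 1
  exact setIntegral_congr_fun measurableSet_Icc fun s hs => (h_laplacian x s hs.1).symm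

end IsSolution

theorem ReachesConsensusOn.mul_of_eventually_abs_le {u : ℝ → ℝ → ℝ} {A : Set ℝ} {φ : ℝ → ℝ}
    {B : ℝ} (hu : ReachesConsensusOn u A) (hφ : ∀ᶠ t in atTop, |φ t| ≤ B) :
    ReachesConsensusOn (fun x t => φ t * u x t) A := by
  intro ε hε
  have hB : 0 < max B 1 := by positivity
  obtain ⟨T₁, hT₁⟩ := hu (ε / max B 1) (by positivity)
  obtain ⟨T₂, hT₂⟩ := eventually_atTop.1 hφ
  refine ⟨max T₁ T₂, fun t ht => ?_⟩
  filter_upwards [hT₁ t (le_of_max_le_left ht)] with q hq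
  calc |φ t * u q.1 t - φ t * u q.2 t| = |φ t| * |u q.1 t - u q.2 t| := by
        rw [← mul_sub, abs_mul]
    _ ≤ max B 1 * (ε / max B 1) :=
      mul_le_mul ((hT₂ t (le_of_max_le_right ht)).trans (le_max_left _ _)) hq
        (abs_nonneg _) hB.le
    _ = ε := mul_div_cancel₀ ε hB.ne'

theorem ReachesConsensusOn.exp_neg_mul {u : ℝ → ℝ → ℝ} {A : Set ℝ} {p : ℝ}
    (hu : ReachesConsensusOn u A) (hp : 0 ≤ p) :
    ReachesConsensusOn (fun x t => Real.exp (-p * t) * u x t) A := by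
  refine hu.mul_of_eventually_abs_le (B := 1) ?_
  filter_upwards [eventually_ge_atTop 0] with t ht
  rw [Real.abs_exp, Real.exp_le_one_iff, neg_mul]
  exact neg_nonpos.2 (mul_nonneg hp ht)

theorem small_world_reduction_general {W : ℝ → ℝ → ℝ} (hW : Measurable (Function.uncurry W))
    (hW_symm : ∀ x y, W x y = W y x) {C : ℝ} (hWC : ∀ x y, |W x y| ≤ C) (p : ℝ)
    {g : ℝ → ℝ} (hg : ∫ y in Icc (0 : ℝ) 1, g y = 0) {v : ℝ → ℝ → ℝ}
    (hv : IsSolution (fun x y => (1 - 2 * p) * W x y) g v) :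
    IsSolution (fun x y => (1 - p) * W x y + p * (1 - W x y)) g
      (fun x t => Real.exp (-p * t) * v x t) ∧
    (0 ≤ p → ReachesConsensusOn v (Icc 0 1) →
      ReachesConsensusOn (fun x t => Real.exp (-p * t) * v x t) (Icc 0 1)) := by
  have h_kernel : (fun x y => (1 - p) * W x y + p * (1 - W x y)) =
      fun x y => (1 - 2 * p) * W x y + p := by
    ext x y
    ring
  have h_bound (x y : ℝ) : |(1 - 2 * p) * W x y| ≤ |1 - 2 * p| * C := by
    rw [abs_mul]
    exact mul_le_mul_of_nonneg_left (hWC x y) (abs_nonneg _)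
  refine ⟨?_, fun hp hc => hc.exp_neg_mul hp⟩
  rw [h_kernel]
  exact hv.exp_neg_mul (hW.const_mul _) (fun x y => by rw [hW_symm]) h_bound hg p

/-- Small-worlds reduction: the solution for the graphon
`W_p = (1−p)W + p(1−W)` with zero-mean initial condition is `e^{−pt}` times the
solution for `(1−2p)W`; hence consensus for the latter implies consensus for the
former. -/
theorem small_world_reduction (W : ℝ → ℝ → ℝ) (hW : IsGraphon W)
    (p : ℝ) (hp : p ∈ Set.Ioo (0:ℝ) (1 / 2))
    (g : ℝ → ℝ) (hg : IsLinf g)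
    (hg0 : ∫ y in Set.Icc (0:ℝ) 1, g y = 0)
    (v : ℝ → ℝ → ℝ)
    (hv : IsSolution (fun x y => (1 - 2 * p) * W x y) g v) :
    IsSolution (fun x y => (1 - p) * W x y + p * (1 - W x y)) g
      (fun x t => Real.exp (-p * t) * v x t) ∧
    (ReachesConsensusOn v (Set.Icc (0:ℝ) 1) →
      ReachesConsensusOn (fun x t => Real.exp (-p * t) * v x t) (Set.Icc (0:ℝ) 1)) := by
  have hW_abs (x y : ℝ) : |W x y| ≤ 1 := abs_le.2 ⟨by linarith [(hW.2.2 x y).1], (hW.2.2 x y).2⟩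
  exact (small_world_reduction_general hW.1 hW.2.1 hW_abs p hg0 hv).imp_right (· hp.1.le)

end
end
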